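/- Let C be a model category, I a set, and suppose C has products indexed by I. Let (A_i)_{i ∈ I} be a family of fibrant objects of C, and let γ : C ⟶ Ho(C) denote the localization functor at the weak equivalences. Then γ(∏_{i ∈ I} A_i), together with the images under γ of the product projections ∏_{i ∈ I} A_i ⟶ A_i, is a product of the family (γ(A_i))_{i ∈ I} in Ho(C). -/

import Mathlib

open CategoryTheory CategoryTheory.Limits

universe v u

/-- `f` is a retract of `g` in the arrow category. -/
def IsRetractOf {C : Type u} [Category.{v} C] {X Y X' Y' : C}
    (f : X ⟶ Y) (g : X' ⟶ Y') : Prop :=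
  ∃ (iX : X ⟶ X') (rX : X' ⟶ X) (iY : Y ⟶ Y') (rY : Y' ⟶ Y),
    iX ≫ rX = 𝟙 X ∧ iY ≫ rY = 𝟙 Y ∧ iX ≫ g = f ≫ iY ∧ g ≫ rY = rX ≫ f

/-- A (Quillen closed) model structure on a finitely bicomplete category `C`: classes of
weak equivalences, fibrations and cofibrations satisfying the two-out-of-three axiom,
closure under retracts, the lifting axioms and the factorization axioms. -/
structure ModelStructure (C : Type u) [Category.{v} C]
    [HasFiniteLimits C] [HasFiniteColimits C] where
  /-- weak equivalences -/
  W : MorphismProperty C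
  /-- fibrations -/
  Fib : MorphismProperty C
  /-- cofibrations -/
  Cof : MorphismProperty C
  W_comp : ∀ {X Y Z : C} (f : X ⟶ Y) (g : Y ⟶ Z), W f → W g → W (f ≫ g)
  W_cancel_left : ∀ {X Y Z : C} (f : X ⟶ Y) (g : Y ⟶ Z), W f → W (f ≫ g) → W g
  W_cancel_right : ∀ {X Y Z : C} (f : X ⟶ Y) (g : Y ⟶ Z), W g → W (f ≫ g) → W f
  W_retract : ∀ {X Y X' Y' : C} (f : X ⟶ Y) (g : X' ⟶ Y'), IsRetractOf f g → W g → W f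
  Fib_retract : ∀ {X Y X' Y' : C} (f : X ⟶ Y) (g : X' ⟶ Y'), IsRetractOf f g → Fib g → Fib f
  Cof_retract : ∀ {X Y X' Y' : C} (f : X ⟶ Y) (g : X' ⟶ Y'), IsRetractOf f g → Cof g → Cof f
  lift_cof_trivFib : ∀ {A B X Y : C} (i : A ⟶ B) (p : X ⟶ Y),
    Cof i → Fib p → W p → HasLiftingProperty i p
  lift_trivCof_fib : ∀ {A B X Y : C} (i : A ⟶ B) (p : X ⟶ Y),
    Cof i → W i → Fib p → HasLiftingProperty i p
  factor_cof_trivFib : ∀ {X Y : C} (f : X ⟶ Y),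
    ∃ (Z : C) (i : X ⟶ Z) (p : Z ⟶ Y), Cof i ∧ Fib p ∧ W p ∧ i ≫ p = f
  factor_trivCof_fib : ∀ {X Y : C} (f : X ⟶ Y),
    ∃ (Z : C) (i : X ⟶ Z) (p : Z ⟶ Y), Cof i ∧ W i ∧ Fib p ∧ i ≫ p = f

namespace ModelStructure

variable {C : Type u} [Category.{v} C] [HasFiniteLimits C] [HasFiniteColimits C]

/-- An object is fibrant if the map to the terminal object is a fibration. -/
def Fibrant (M : ModelStructure C) (X : C) : Prop := M.Fib (terminal.from X)

/-- An object is cofibrant if the map from the initial object is a cofibration. -/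
def Cofibrant (M : ModelStructure C) (X : C) : Prop := M.Cof (initial.to X)

end ModelStructure

universe w

/-!
In `Ho(C)` every object is the image of a cofibrant object `X`, and for `B` fibrant the maps
`γ X ⟶ γ B` are the left homotopy classes of maps `X ⟶ B`. A product of fibrant objects is fibrant,
so it suffices that homotopy classes of maps out of `X` commute with products. The point is that,
the targets being fibrant, homotopies between all the components of two maps can be taken relative
to one and the same good cylinder object of `X`, and then they assemble to a single homotopy.
-/

open HomotopicalAlgebra

section Fans

variable {H : Type*} [Category* H] {I : Type*} {B : I → H} {c : Fan B}

lemma nonempty_isLimit_fan_of_bijective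
    (h : ∀ Z : H, Function.Bijective fun (f : Z ⟶ c.pt) i ↦ f ≫ c.proj i) :
    Nonempty (IsLimit c) := by
  choose l hl using fun s : Fan B ↦ (h s.pt).surjective s.proj
  exact ⟨Fan.IsLimit.mk c l (fun s i ↦ congrFun (hl s) i)
    fun s m hm ↦ (h s.pt).injective ((funext hm).trans (hl s).symm)⟩

lemma nonempty_isLimit_fan_of_essSurj {D : Type*} [Category* D] (F : D ⥤ H) [F.EssSurj]
    (h : ∀ X : D, Function.Bijective fun (f : F.obj X ⟶ c.pt) i ↦ f ≫ c.proj i) :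
    Nonempty (IsLimit c) := by
  refine nonempty_isLimit_fan_of_bijective fun Z ↦ ?_
  let e : F.obj (F.objPreimage Z) ≅ Z := F.objObjPreimageIso Z
  refine ⟨fun f g hfg ↦ ?_, fun a ↦ ?_⟩
  · rw [← cancel_epi e.hom]
    refine (h _).injective (funext fun i ↦ ?_)
    simpa only [Category.assoc] using congrArg (e.hom ≫ ·) (congrFun hfg i)
  · obtain ⟨f, hf⟩ := (h _).surjective fun i ↦ e.hom ≫ a i
    refine ⟨e.inv ≫ f, funext fun i ↦ ?_⟩
    calc (e.inv ≫ f) ≫ c.proj i = e.inv ≫ f ≫ c.proj i := Category.assoc _ _ _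
      _ = e.inv ≫ e.hom ≫ a i := congrArg (e.inv ≫ ·) (congrFun hf i)
      _ = a i := e.inv_hom_id_assoc _

end Fans

section Products

variable {C : Type*} [Category* C] {I : Type*} {A : I → C} {c : Fan A}

lemma isFibrant_of_isLimit_fan [CategoryWithFibrations C] [HasTerminal C]
    [(fibrations C).IsStableUnderProductsOfShape I] [∀ i, IsFibrant (A i)] (hc : IsLimit c) :
    IsFibrant c.pt := by
  let t : Fan fun _ : I ↦ ⊤_ C := Fan.mk (⊤_ C) fun _ ↦ 𝟙 _
  have ht : IsLimit t := Fan.IsLimit.mk t (fun _ ↦ terminal.from _)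
    (fun _ _ ↦ terminal.hom_ext _ _) (fun _ _ _ ↦ terminal.hom_ext _ _)
  exact ⟨MorphismProperty.IsStableUnderLimitsOfShape.condition _ _ c t hc ht
    (Discrete.natTrans fun _ ↦ terminal.from _) (fun ⟨i⟩ ↦ mem_fibrations (terminal.from (A i))) _
    (fun _ ↦ terminal.hom_ext _ _)⟩

/-- Homotopies, relative to one fixed precylinder, between the components of two maps into a
product assemble to a homotopy between the two maps. -/
def leftHomotopyOfIsLimitFan (hc : IsLimit c) {X : C} {P : Precylinder X} {f g : X ⟶ c.pt}
    (h : ∀ i, P.LeftHomotopy (f ≫ c.proj i) (g ≫ c.proj i)) : P.LeftHomotopy f g where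
  h := Fan.IsLimit.lift hc fun i ↦ (h i).h
  h₀ := Fan.IsLimit.hom_ext hc _ _ fun i ↦ by rw [Category.assoc, Fan.IsLimit.fac, (h i).h₀]
  h₁ := Fan.IsLimit.hom_ext hc _ _ fun i ↦ by rw [Category.assoc, Fan.IsLimit.fac, (h i).h₁]

variable [ModelCategory C] [∀ i, IsFibrant (A i)]

lemma leftHomotopyRel_of_isLimit_fan (hc : IsLimit c) {X : C} [IsCofibrant X] {f g : X ⟶ c.pt}
    (h : ∀ i, LeftHomotopyRel (f ≫ c.proj i) (g ≫ c.proj i)) : LeftHomotopyRel f g := by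
  obtain ⟨P, _⟩ := Cylinder.exists_very_good X
  exact ⟨P, ⟨leftHomotopyOfIsLimitFan hc fun i ↦ (h i).leftHomotopy P⟩⟩

variable {H : Type*} [Category* H] (L : C ⥤ H) [L.IsLocalization (weakEquivalences C)]

lemma bijective_comp_map_proj_of_isCofibrant (hc : IsLimit c) (X : C) [IsCofibrant X] :
    Function.Bijective fun (f : L.obj X ⟶ L.obj c.pt) i ↦ f ≫ L.map (c.proj i) := by
  have := isFibrant_of_isLimit_fan hc
  refine ⟨fun f g hfg ↦ ?_, fun a ↦ ?_⟩
  · obtain ⟨f, rfl⟩ := map_surjective_of_isLocalization L X c.pt f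
    obtain ⟨g, rfl⟩ := map_surjective_of_isLocalization L X c.pt g
    rw [← LeftHomotopyRel.iff_map_eq]
    refine leftHomotopyRel_of_isLimit_fan hc fun i ↦ ?_
    rw [LeftHomotopyRel.iff_map_eq L, L.map_comp, L.map_comp]
    exact congrFun hfg i
  · choose b hb using fun i ↦ map_surjective_of_isLocalization L X (A i) (a i)
    refine ⟨L.map (Fan.IsLimit.lift hc b), funext fun i ↦ ?_⟩
    calc L.map (Fan.IsLimit.lift hc b) ≫ L.map (c.proj i)
        = L.map (Fan.IsLimit.lift hc b ≫ c.proj i) := (L.map_comp _ _).symm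
      _ = a i := by rw [Fan.IsLimit.fac, hb]

variable (A) in
theorem preservesLimit_discrete_of_isFibrant : PreservesLimit (Discrete.functor A) L where
  preserves {c} hc := by
    have := Localization.essSurj (CofibrantObject.ι ⋙ L) (weakEquivalences (CofibrantObject C))
    obtain ⟨h⟩ := nonempty_isLimit_fan_of_essSurj
      (c := Fan.mk (L.obj c.pt) fun i ↦ L.map (Fan.proj c i)) (CofibrantObject.ι ⋙ L)
      fun X ↦ bijective_comp_map_proj_of_isCofibrant L hc X.obj
    exact ⟨(Fan.isLimitMapConeEquiv L A c).symm h⟩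

end Products

lemma isRetractOf_of_retractArrow {C : Type u} [Category.{v} C] {X Y X' Y' : C}
    {f : X ⟶ Y} {g : X' ⟶ Y'} (h : RetractArrow f g) : IsRetractOf f g :=
  ⟨h.i.left, h.r.left, h.i.right, h.r.right, h.retract_left, h.retract_right, h.i_w, h.r_w.symm⟩

/-- The model structure `M` as an instance of Mathlib's `ModelCategory`, which makes the homotopy
theory of the library available. It is reducible so that, for example, `weakEquivalences C` is seen
to be `M.W`. -/
@[reducible]
def ModelStructure.toModelCategory {C : Type u} [Category.{v} C] [HasFiniteLimits C]
    [HasFiniteColimits C] (M : ModelStructure C) : ModelCategory C where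
  categoryWithFibrations := ⟨M.Fib⟩
  categoryWithCofibrations := ⟨M.Cof⟩
  categoryWithWeakEquivalences := ⟨M.W⟩
  cm2 :=
    { comp_mem := M.W_comp
      of_postcomp := M.W_cancel_right
      of_precomp := M.W_cancel_left }
  cm3a := ⟨fun h ↦ M.W_retract _ _ (isRetractOf_of_retractArrow h)⟩
  cm3b := ⟨fun h ↦ M.Fib_retract _ _ (isRetractOf_of_retractArrow h)⟩
  cm3c := ⟨fun h ↦ M.Cof_retract _ _ (isRetractOf_of_retractArrow h)⟩
  cm4a i p hi hw hp := M.lift_trivCof_fib i p hi.mem hw.mem hp.mem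
  cm4b i p hi hp hw := M.lift_cof_trivFib i p hi.mem hp.mem hw.mem
  cm5a := ⟨fun f ↦
    have ⟨Z, i, p, hi, hw, hp, fac⟩ := M.factor_trivCof_fib f
    ⟨⟨Z, i, p, fac, ⟨hi, hw⟩, hp⟩⟩⟩
  cm5b := ⟨fun f ↦
    have ⟨Z, i, p, hi, hp, hw, fac⟩ := M.factor_cof_trivFib f
    ⟨⟨Z, i, p, fac, hi, ⟨hp, hw⟩⟩⟩⟩

theorem stmt_5_general {C : Type u} [Category.{v} C] [HasFiniteLimits C] [HasFiniteColimits C]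
    (M : ModelStructure C) {I : Type w} (A : I → C) (hA : ∀ i, M.Fibrant (A i))
    {H : Type*} [Category* H] (L : C ⥤ H) [hL : L.IsLocalization M.W] :
    PreservesLimit (Discrete.functor A) L := by
  let := M.toModelCategory
  have : ∀ i, IsFibrant (A i) := fun i ↦ ⟨hA i⟩
  have : L.IsLocalization (weakEquivalences C) := hL
  exact preservesLimit_discrete_of_isFibrant A L

/-- In a model category `C` with products indexed by `I`, for a family of
fibrant objects `A i`, the image of `∏ A` under the localization functor `γ : C ⥤ Ho(C)`,
together with the images of the projections, is a product of the `γ(A i)` in `Ho(C)`. -/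
theorem stmt_5 {C : Type u} [Category.{v} C] [HasFiniteLimits C] [HasFiniteColimits C]
    (M : ModelStructure C) {I : Type w} [HasProductsOfShape I C]
    (A : I → C) (hA : ∀ i, M.Fibrant (A i)) :
    Nonempty (IsLimit (Fan.mk (M.W.Q.obj (∏ᶜ A)) (fun i => M.W.Q.map (Pi.π A i)))) := by
  have := stmt_5_general M A hA M.W.Q
  exact ⟨isLimitOfHasProductOfPreservesLimit M.W.Q A⟩
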